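/- arXiv:1109.3814 — 5 statements merged into one kernel-verified Lean document; each statement's English description precedes it below -/
import Mathlib

section
/- The set of positive rational numbers T with 9/5 ≤ T ≤ 12/5 such that T·60³ is an integer divisible by 10 and (1/T)·60⁴ is an integer divisible by 10 has exactly 15 elements, and it equals {12/5, 64/27, 75/32, 125/54, 9/4, 20/9, 54/25, 32/15, 25/12, 81/40, 2, 48/25, 15/8, 50/27, 9/5}. -/
/-- A positive rational `T` satisfies the four-place multiple-of-10 criterion:
`T·60³` is an integer divisible by 10 and `(1/T)·60⁴` is an integer divisible by 10. -/
def FourPlaceMul10 (T : ℚ) : Prop :=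
  (∃ m : ℤ, T * 60 ^ 3 = 10 * m) ∧ (∃ n : ℤ, T⁻¹ * 60 ^ 4 = 10 * n)

/-!
If `T * 21600 = m` and `T⁻¹ * 1296000 = n` are integers, then
`m * n = 21600 * 1296000 = 2 ^ 12 * 3 ^ 7 * 5 ^ 5`, so the admissible `T` are the fractions
`m / 21600` with `m` a divisor of this number. The condition `9 / 5 ≤ T ≤ 12 / 5` reads
`38880 ≤ m ≤ 51840`, and comparing the `13 * 8 * 6` products `2 ^ i * 3 ^ j * 5 ^ k` with these
bounds leaves fifteen values of `m`.
-/

theorem exists_int_mul_eq_and_inv_mul_eq_iff {K : Type*} [Field K] [CharZero K] {x : K}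
    (hx : x ≠ 0) {a : ℤ} (ha : a ≠ 0) (b : ℤ) :
    ((∃ m : ℤ, x * a = m) ∧ ∃ n : ℤ, x⁻¹ * b = n) ↔ ∃ m : ℤ, m ∣ a * b ∧ x = m / a := by
  have ha' : (a : K) ≠ 0 := Int.cast_ne_zero.mpr ha
  constructor
  · rintro ⟨⟨m, hm⟩, n, hn⟩
    refine ⟨m, ⟨n, ?_⟩, eq_div_of_mul_eq ha' hm⟩
    have : (a * b : K) = m * n := by
      rw [← hm, ← hn]
      field_simp
    exact_mod_cast this
  · rintro ⟨m, ⟨n, hmn⟩, rfl⟩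
    have hm : (m : K) ≠ 0 := (div_ne_zero_iff.mp hx).1
    have hmn' : (a * b : K) = m * n := by exact_mod_cast hmn
    refine ⟨⟨m, div_mul_cancel₀ _ ha'⟩, n, ?_⟩
    rw [inv_div, div_mul_eq_mul_div, hmn', mul_div_cancel_left₀ _ hm]

theorem fourPlaceMul10_iff_exists_int {T : ℚ} (hT : T ≠ 0) :
    FourPlaceMul10 T ↔ ∃ m : ℤ, m ∣ 2 ^ 12 * 3 ^ 7 * 5 ^ 5 ∧ T = m / 21600 := by
  have hmul (m : ℤ) : T * 60 ^ 3 = 10 * m ↔ T * (21600 : ℤ) = m := by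
    push_cast
    constructor <;> intro h <;> linarith
  have hinv (n : ℤ) : T⁻¹ * 60 ^ 4 = 10 * n ↔ T⁻¹ * (1296000 : ℤ) = n := by
    push_cast
    constructor <;> intro h <;> linarith
  have hprod : (21600 * 1296000 : ℤ) = 2 ^ 12 * 3 ^ 7 * 5 ^ 5 := by norm_num
  simp only [FourPlaceMul10, hmul, hinv]
  rw [exists_int_mul_eq_and_inv_mul_eq_iff hT (by norm_num), hprod, Int.cast_ofNat]

theorem fourPlaceMul10_iff_exists_mem_divisors {T : ℚ} (hT : 0 < T) :
    FourPlaceMul10 T ↔ ∃ m : ℕ, m ∈ (2 ^ 12 * 3 ^ 7 * 5 ^ 5).divisors ∧ T = m / 21600 := by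
  rw [fourPlaceMul10_iff_exists_int hT.ne']
  constructor
  · rintro ⟨m, hm, rfl⟩
    have hm_pos : 0 < m := by
      exact_mod_cast (div_pos_iff_of_pos_right (by norm_num : (0 : ℚ) < 21600)).mp hT
    lift m to ℕ using hm_pos.le
    exact ⟨m, Nat.mem_divisors.mpr ⟨by exact_mod_cast hm, by positivity⟩, by rw [Int.cast_natCast]⟩
  · rintro ⟨m, hm, rfl⟩
    exact ⟨m, by exact_mod_cast Nat.dvd_of_mem_divisors hm, by rw [Int.cast_natCast]⟩

theorem mem_divisors_prime_pow_mul_prime_pow_mul_prime_pow {p q r : ℕ} (hp : p.Prime) (hq : q.Prime)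
    (hr : r.Prime) (a b c : ℕ) {m : ℕ} :
    m ∈ (p ^ a * q ^ b * r ^ c).divisors ↔
      ∃ i ≤ a, ∃ j ≤ b, ∃ k ≤ c, p ^ i * q ^ j * r ^ k = m := by
  simp only [Nat.divisors_mul, Finset.mem_mul, Nat.mem_divisors_prime_pow hp,
    Nat.mem_divisors_prime_pow hq, Nat.mem_divisors_prime_pow hr]
  constructor
  · rintro ⟨_, ⟨_, ⟨i, hi, rfl⟩, _, ⟨j, hj, rfl⟩, rfl⟩, _, ⟨k, hk, rfl⟩, rfl⟩
    exact ⟨i, hi, j, hj, k, hk, rfl⟩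
  · rintro ⟨i, hi, j, hj, k, hk, rfl⟩
    exact ⟨_, ⟨_, ⟨i, hi, rfl⟩, _, ⟨j, hj, rfl⟩, rfl⟩, _, ⟨k, hk, rfl⟩, rfl⟩

/-- The integers `T * 21600` for the fifteen parameters `T` of the tablet, listed
in the order of its rows. -/
def plimptonNumerators : Finset ℕ :=
  {51840, 51200, 50625, 50000, 48600, 48000, 46656, 46080, 45000, 43740, 43200, 41472, 40500,
    40000, 38880}

theorem mem_plimptonNumerators_iff {m : ℕ} :
    m ∈ plimptonNumerators ↔
      m ∈ (2 ^ 12 * 3 ^ 7 * 5 ^ 5).divisors ∧ 38880 ≤ m ∧ m ≤ 51840 := by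
  constructor
  · have hcheck : ∀ m ∈ plimptonNumerators,
        m ∣ 2 ^ 12 * 3 ^ 7 * 5 ^ 5 ∧ 38880 ≤ m ∧ m ≤ 51840 := by
      decide
    intro hm
    exact ⟨Nat.mem_divisors.mpr ⟨(hcheck m hm).1, by positivity⟩, (hcheck m hm).2⟩
  · have hcheck : ∀ i ≤ 12, ∀ j ≤ 7, ∀ k ≤ 5,
        38880 ≤ 2 ^ i * 3 ^ j * 5 ^ k ∧ 2 ^ i * 3 ^ j * 5 ^ k ≤ 51840 →
          2 ^ i * 3 ^ j * 5 ^ k ∈ plimptonNumerators := by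
      decide +kernel
    rintro ⟨hm, hrange⟩
    obtain ⟨i, hi, j, hj, k, hk, rfl⟩ :=
      (mem_divisors_prime_pow_mul_prime_pow_mul_prime_pow
        Nat.prime_two Nat.prime_three Nat.prime_five 12 7 5).mp hm
    exact hcheck i hi j hj k hk hrange

theorem setOf_fourPlaceMul10_eq_image_plimptonNumerators :
    {T : ℚ | 0 < T ∧ 9/5 ≤ T ∧ T ≤ 12/5 ∧ FourPlaceMul10 T} =
      (fun m : ℕ ↦ (m / 21600 : ℚ)) '' plimptonNumerators := by
  have hbounds (m : ℕ) : (9/5 ≤ (m / 21600 : ℚ) ∧ (m / 21600 : ℚ) ≤ 12/5) ↔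
      38880 ≤ m ∧ m ≤ 51840 := by
    rw [le_div_iff₀ (by norm_num), div_le_iff₀ (by norm_num)]
    norm_num
  ext T
  simp only [Set.mem_ofPred_eq, Set.mem_image, SetLike.mem_coe, mem_plimptonNumerators_iff]
  constructor
  · rintro ⟨hT, hlower, hupper, hcrit⟩
    obtain ⟨m, hm, rfl⟩ := (fourPlaceMul10_iff_exists_mem_divisors hT).mp hcrit
    exact ⟨m, ⟨hm, (hbounds m).mp ⟨hlower, hupper⟩⟩, rfl⟩
  · rintro ⟨m, ⟨hm, hrange⟩, rfl⟩
    obtain ⟨hlower, hupper⟩ := (hbounds m).mpr hrange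
    have hpos : (0 : ℚ) < m / 21600 := by linarith
    exact ⟨hpos, hlower, hupper, (fourPlaceMul10_iff_exists_mem_divisors hpos).mpr ⟨m, hm, rfl⟩⟩

theorem plimpton_parameters :
    {T : ℚ | 0 < T ∧ 9/5 ≤ T ∧ T ≤ 12/5 ∧ FourPlaceMul10 T}.ncard = 15 ∧
    {T : ℚ | 0 < T ∧ 9/5 ≤ T ∧ T ≤ 12/5 ∧ FourPlaceMul10 T} =
      ({12/5, 64/27, 75/32, 125/54, 9/4, 20/9, 54/25, 32/15, 25/12, 81/40, 2,
        48/25, 15/8, 50/27, 9/5} : Set ℚ) := by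
  have hinj : Function.Injective (fun m : ℕ ↦ (m / 21600 : ℚ)) :=
    fun _ _ h ↦ Nat.cast_injective ((div_left_inj' (by norm_num)).mp h)
  rw [setOf_fourPlaceMul10_eq_image_plimptonNumerators]
  constructor
  · rw [Set.ncard_image_of_injective _ hinj, Set.ncard_coe_finset]
    rfl
  · simp only [plimptonNumerators, Finset.coe_insert, Finset.coe_singleton, Set.image_insert_eq,
      Set.image_singleton]
    norm_num
end

section
/- The set of pairs (P, Q) of positive integers such that P and Q are coprime, both P and Q are regular, 1 ≤ Q < 60, and √2 − 1 < Q/P ≤ 5/9, is exactly the fifteen pairs {(12,5), (64,27), (75,32), (125,54), (9,4), (20,9), (54,25), (32,15), (25,12), (81,40), (2,1), (48,25), (15,8), (50,27), (9,5)}. -/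
/-- A positive integer is regular if it has no prime factors other than 2, 3 and 5. -/
def BabylonianRegular (n : ℕ) : Prop := ∀ p : ℕ, p.Prime → p ∣ n → p = 2 ∨ p = 3 ∨ p = 5

/-!
Since `√2 - 1 > 2 / 5`, the bounds on `Q / P` and `Q < 60` force `P < 5 / 2 * 60 = 150`, so only
finitely many pairs remain. Among them every condition is decidable by integer arithmetic: the
inequality with `√2` says `2 * P ^ 2 < (P + Q) ^ 2`, and a number `n ≤ 2 ^ k` has no prime
exponent above `k`, so it is regular exactly when it divides `30 ^ k`.
-/

theorem dvd_pow_of_forall_prime_dvd {m n k : ℕ} (hn : n ≠ 0) (hnk : n ≤ 2 ^ k)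
    (h : ∀ p : ℕ, p.Prime → p ∣ n → p ∣ m) : n ∣ m ^ k := by
  rw [Nat.dvd_iff_prime_pow_dvd_dvd]
  intro p j hp hj
  obtain rfl | hj₀ := eq_or_ne j 0
  · simp
  have hjk : j ≤ k := (Nat.pow_le_pow_iff_right one_lt_two).1 <| calc
    2 ^ j ≤ p ^ j := Nat.pow_le_pow_left hp.two_le j
    _ ≤ n := Nat.le_of_dvd (Nat.pos_of_ne_zero hn) hj
    _ ≤ 2 ^ k := hnk
  have hpm : p ∣ m := h p hp ((dvd_pow_self p hj₀).trans hj)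
  exact (pow_dvd_pow p hjk).trans (pow_dvd_pow_of_dvd hpm k)

theorem prime_dvd_thirty_iff {p : ℕ} (hp : p.Prime) : p ∣ 30 ↔ p = 2 ∨ p = 3 ∨ p = 5 := by
  rw [show 30 = 2 * (3 * 5) by norm_num, hp.dvd_mul, hp.dvd_mul,
    Nat.prime_dvd_prime_iff_eq hp Nat.prime_two, Nat.prime_dvd_prime_iff_eq hp Nat.prime_three,
    Nat.prime_dvd_prime_iff_eq hp Nat.prime_five]

namespace BabylonianRegular

theorem ne_zero {n : ℕ} (h : BabylonianRegular n) : n ≠ 0 := by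
  rintro rfl
  simpa using h 7 (by norm_num) (dvd_zero 7)

theorem iff_dvd_thirty_pow {n k : ℕ} (hnk : n ≤ 2 ^ k) :
    BabylonianRegular n ↔ n ∣ 30 ^ k where
  mp h := dvd_pow_of_forall_prime_dvd h.ne_zero hnk fun p hp hpn ↦
    (prime_dvd_thirty_iff hp).2 (h p hp hpn)
  mpr h _ hp hpn := (prime_dvd_thirty_iff hp).1 (hp.dvd_of_dvd_pow (hpn.trans h))

end BabylonianRegular

theorem sqrt_two_sub_one_lt_div_iff {p q : ℝ} (hp : 0 < p) (hpq : 0 < p + q) :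
    √2 - 1 < q / p ↔ 2 * p ^ 2 < (p + q) ^ 2 := by
  rw [sub_lt_iff_lt_add', one_add_div hp.ne', Real.sqrt_lt' (by positivity), div_pow,
    lt_div_iff₀ (by positivity)]

theorem two_mul_lt_five_mul_of_sqrt_two_sub_one_lt_div {p q : ℝ} (hp : 0 < p)
    (h : √2 - 1 < q / p) : 2 * p < 5 * q := by
  have hsqrt : 7 / 5 < √2 := Real.lt_sqrt_of_sq_lt (by norm_num)
  have hdiv : 2 / 5 < q / p := by linarith
  rw [div_lt_div_iff₀ (by norm_num) hp] at hdiv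
  linarith

/-- The generating pairs `(P, Q)` of Plimpton 322 with `P < 150`, as a finite set that can be
computed. All the conditions are in integers; the exponent `8` in the one for regularity serves
because `150 ≤ 2 ^ 8`. -/
def generatingPairs : Finset (ℕ × ℕ) :=
  {pq ∈ {p ∈ Finset.Ioo 0 150 | p ∣ 30 ^ 8} ×ˢ {q ∈ Finset.Ioo 0 60 | q ∣ 30 ^ 8} |
    Nat.Coprime pq.1 pq.2 ∧ 2 * pq.1 ^ 2 < (pq.1 + pq.2) ^ 2 ∧ 9 * pq.2 ≤ 5 * pq.1}

theorem mem_generatingPairs {p q : ℕ} :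
    (p, q) ∈ generatingPairs ↔
      (0 < p ∧ p < 150 ∧ BabylonianRegular p) ∧ (0 < q ∧ q < 60 ∧ BabylonianRegular q) ∧
        Nat.Coprime p q ∧ √2 - 1 < (q : ℝ) / p ∧ (q : ℚ) / p ≤ 5 / 9 := by
  simp only [generatingPairs, Finset.mem_filter, Finset.mem_product, Finset.mem_Ioo, and_assoc]
  refine and_congr_right fun hp ↦ and_congr_right fun hp150 ↦ ?_
  have hp_reg : BabylonianRegular p ↔ p ∣ 30 ^ 8 :=
    BabylonianRegular.iff_dvd_thirty_pow (by omega)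
  rw [hp_reg]
  refine and_congr_right fun _ ↦ and_congr_right fun hq ↦ and_congr_right fun hq60 ↦ ?_
  have hq_reg : BabylonianRegular q ↔ q ∣ 30 ^ 8 :=
    BabylonianRegular.iff_dvd_thirty_pow (by omega)
  have h_sqrt : √2 - 1 < (q : ℝ) / p ↔ 2 * p ^ 2 < (p + q) ^ 2 := by
    rw [sqrt_two_sub_one_lt_div_iff (by positivity) (by positivity)]
    norm_cast
  have h_ratio : (q : ℚ) / p ≤ 5 / 9 ↔ 9 * q ≤ 5 * p := by
    rw [div_le_div_iff₀ (by positivity) (by norm_num), mul_comm]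
    norm_cast
  rw [hq_reg, h_sqrt, h_ratio]

theorem plimpton_generating_pairs :
    {pq : ℕ × ℕ | 0 < pq.1 ∧ 0 < pq.2 ∧ Nat.Coprime pq.1 pq.2 ∧
        BabylonianRegular pq.1 ∧ BabylonianRegular pq.2 ∧ 1 ≤ pq.2 ∧ pq.2 < 60 ∧
        Real.sqrt 2 - 1 < (pq.2 : ℝ) / (pq.1 : ℝ) ∧ (pq.2 : ℚ) / (pq.1 : ℚ) ≤ 5/9} =
      ({(12,5), (64,27), (75,32), (125,54), (9,4), (20,9), (54,25), (32,15),
        (25,12), (81,40), (2,1), (48,25), (15,8), (50,27), (9,5)} : Set (ℕ × ℕ)) := by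
  trans (generatingPairs : Set (ℕ × ℕ))
  · ext ⟨p, q⟩
    rw [Finset.mem_coe, mem_generatingPairs]
    constructor
    · rintro ⟨hp, hq, hpq, hp_reg, hq_reg, -, hq60, h_lower, h_upper⟩
      have h_lt : 2 * p < 5 * q := by
        exact_mod_cast two_mul_lt_five_mul_of_sqrt_two_sub_one_lt_div
          (Nat.cast_pos.2 hp) h_lower
      exact ⟨⟨hp, by omega, hp_reg⟩, ⟨hq, hq60, hq_reg⟩, hpq, h_lower, h_upper⟩
    · rintro ⟨⟨hp, -, hp_reg⟩, ⟨hq, hq60, hq_reg⟩, hpq, h_lower, h_upper⟩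
      exact ⟨hp, hq, hpq, hp_reg, hq_reg, hq, hq60, h_lower, h_upper⟩
  · simp only [← Finset.coe_singleton, ← Finset.coe_insert, Finset.coe_inj]
    decide +kernel
end

section
/- There are exactly 38 pairs (P, Q) of positive integers such that P and Q are coprime, both P and Q are regular, 1 ≤ Q < 60, and Q < P < (29/12)·Q. -/
/-!
Every prime divides `0`, so the regular numbers are exactly the `6`-smooth numbers. The bounds
`Q < 60` and `P < (29 / 12) * Q` force `P < (29 / 12) * 60 = 145`, so the admissible pairs lie in a
finite box of smooth numbers and can be enumerated.
-/

theorem babylonianRegular_iff_mem_smoothNumbers {n : ℕ} :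
    BabylonianRegular n ↔ n ∈ Nat.smoothNumbers 6 := by
  rw [Nat.mem_smoothNumbers']
  refine forall₂_congr fun p hp ↦ imp_congr_right fun _ ↦ ⟨by omega, fun hlt ↦ ?_⟩
  interval_cases p <;> revert hp <;> decide

/-- The coprime pairs `(P, Q)` of `k`-smooth numbers with `Q < N` and `1 < P / Q < r`, as a finset:
the box `P ≤ ⌈r * N⌉₊`, `Q ≤ N` only makes it finite, see `mem_coprimeSmoothPairs`. -/
def coprimeSmoothPairs (k N : ℕ) (r : ℚ) : Finset (ℕ × ℕ) :=
  {pq ∈ Nat.smoothNumbersUpTo ⌈r * N⌉₊ k ×ˢ Nat.smoothNumbersUpTo N k |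
    Nat.Coprime pq.1 pq.2 ∧ pq.2 < N ∧ pq.2 < pq.1 ∧ (pq.1 : ℚ) < r * pq.2}

theorem mem_coprimeSmoothPairs {k N : ℕ} {r : ℚ} {p q : ℕ} :
    (p, q) ∈ coprimeSmoothPairs k N r ↔
      p ∈ Nat.smoothNumbers k ∧ q ∈ Nat.smoothNumbers k ∧ Nat.Coprime p q ∧
        q < N ∧ q < p ∧ (p : ℚ) < r * q := by
  simp only [coprimeSmoothPairs, Finset.mem_filter, Finset.mem_product, Nat.mem_smoothNumbersUpTo]
  refine ⟨fun ⟨⟨⟨_, hp⟩, _, hq⟩, h⟩ ↦ ⟨hp, hq, h⟩, ?_⟩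
  rintro ⟨hp, hq, hcop, hqN, hqp, hpr⟩
  have hr : 0 ≤ r := (pos_of_mul_pos_left (p.cast_nonneg.trans_lt hpr) q.cast_nonneg).le
  have hpN : (p : ℚ) < r * N := hpr.trans_le (by gcongr)
  exact ⟨⟨⟨(Nat.lt_ceil.2 hpN).le, hp⟩, hqN.le, hq⟩, hcop, hqN, hqp, hpr⟩

theorem coprimeSmoothPairs_six_sixty_eq :
    coprimeSmoothPairs 6 60 (29 / 12) =
      {(2, 1), (3, 2), (4, 3), (5, 3), (5, 4), (9, 4), (6, 5), (8, 5), (9, 5), (12, 5), (9, 8),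
        (15, 8), (10, 9), (16, 9), (20, 9), (25, 12), (16, 15), (32, 15), (25, 16), (27, 16),
        (25, 18), (27, 20), (25, 24), (27, 25), (32, 25), (36, 25), (48, 25), (54, 25), (32, 27),
        (40, 27), (50, 27), (64, 27), (45, 32), (75, 32), (81, 40), (64, 45), (81, 50),
        (125, 54)} := by
  decide +kernel

theorem friberg_38_pairs :
    {pq : ℕ × ℕ | 0 < pq.1 ∧ 0 < pq.2 ∧ Nat.Coprime pq.1 pq.2 ∧
        BabylonianRegular pq.1 ∧ BabylonianRegular pq.2 ∧ 1 ≤ pq.2 ∧ pq.2 < 60 ∧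
        pq.2 < pq.1 ∧ (pq.1 : ℚ) < (29/12) * (pq.2 : ℚ)}.ncard = 38 := by
  have pos_of_mem {n : ℕ} (hn : n ∈ Nat.smoothNumbers 6) : 0 < n :=
    Nat.pos_of_ne_zero (Nat.ne_zero_of_mem_smoothNumbers hn)
  trans (coprimeSmoothPairs 6 60 (29 / 12)).card
  · rw [← Set.ncard_coe_finset]
    congr 1
    ext ⟨p, q⟩
    simp only [Set.mem_ofPred_eq, Finset.mem_coe, mem_coprimeSmoothPairs,
      babylonianRegular_iff_mem_smoothNumbers]
    constructor
    · rintro ⟨-, -, hcop, hp, hq, -, hbounds⟩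
      exact ⟨hp, hq, hcop, hbounds⟩
    · rintro ⟨hp, hq, hcop, hbounds⟩
      exact ⟨pos_of_mem hp, pos_of_mem hq, hcop, hp, hq, pos_of_mem hq, hbounds⟩
  · rw [coprimeSmoothPairs_six_sixty_eq]
    rfl
end

section
/- The set of positive rational numbers T with 81/80 ≤ T ≤ 16/9 such that T·60³ is an integer divisible by 10 and (1/T)·60⁴ is an integer divisible by 10 has exactly 28 elements. -/
/-!
The two integers `T * 60 ^ 3 / 10` and `T⁻¹ * 60 ^ 4 / 10` have product
`60 ^ 7 / 100 = 2 ^ 12 * 3 ^ 7 * 5 ^ 5`. The admissible `T` are therefore the fractions `d / 21600`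
with `d` a divisor of this number, and the bounds on `T` become `21870 ≤ d ≤ 38400`.
-/

theorem exists_int_mul_and_inv_mul_iff_exists_dvd {K : Type*} [Field K] [LinearOrder K]
    [IsStrictOrderedRing K] {a : ℕ} (b : ℕ) {q : K} (ha : a ≠ 0) (hq : 0 < q) :
    ((∃ m : ℤ, q * a = m) ∧ ∃ n : ℤ, q⁻¹ * b = n) ↔ ∃ d : ℕ, d ∣ a * b ∧ q = d / a := by
  have ha' : (a : K) ≠ 0 := Nat.cast_ne_zero.mpr ha
  constructor
  · rintro ⟨⟨m, hm⟩, n, hn⟩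
    have hm_nonneg : 0 ≤ m := by
      have : (0 : K) ≤ m := hm ▸ by positivity
      exact_mod_cast this
    lift m to ℕ using hm_nonneg
    have hprod : (a * b : K) = m * n := by
      calc (a * b : K) = (q * a) * (q⁻¹ * b) := by field_simp
        _ = m * n := by rw [hm, hn, Int.cast_natCast]
    refine ⟨m, Int.natCast_dvd_natCast.mp ⟨n, by exact_mod_cast hprod⟩, ?_⟩
    rw [eq_div_iff ha', hm, Int.cast_natCast]
  · rintro ⟨d, ⟨c, hc⟩, rfl⟩
    have hd : (d : K) ≠ 0 := fun h => by simp [h] at hq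
    have hc' : (a * b : K) = d * c := by exact_mod_cast hc
    refine ⟨⟨d, ?_⟩, c, ?_⟩
    · rw [div_mul_cancel₀ _ ha', Int.cast_natCast]
    · rw [inv_div, div_mul_eq_mul_div, hc', mul_div_cancel_left₀ _ hd, Int.cast_natCast]

theorem fourPlaceMul10_iff_exists_dvd {T : ℚ} (hT : 0 < T) :
    FourPlaceMul10 T ↔ ∃ d : ℕ, d ∣ 2 ^ 12 * 3 ^ 7 * 5 ^ 5 ∧ T = d / 21600 := by
  have hmul (m : ℤ) : T * 60 ^ 3 = 10 * m ↔ T * (21600 : ℕ) = m := by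
    constructor <;> intro h <;> push_cast at * <;> linarith
  have hinv (n : ℤ) : T⁻¹ * 60 ^ 4 = 10 * n ↔ T⁻¹ * (1296000 : ℕ) = n := by
    constructor <;> intro h <;> push_cast at * <;> linarith
  have hprod : 21600 * 1296000 = 2 ^ 12 * 3 ^ 7 * 5 ^ 5 := by norm_num
  simp only [FourPlaceMul10, hmul, hinv, ← hprod]
  exact exists_int_mul_and_inv_mul_iff_exists_dvd 1296000 (by norm_num) hT

/-- The numerators over `21600` of the rows with `81/80 ≤ T ≤ 16/9`;
the bounds are `21600 * 81/80` and `21600 * 16/9`. -/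
def lowerRowNumerators : Finset ℕ :=
  {d ∈ Nat.divisors (2 ^ 12 * 3 ^ 7 * 5 ^ 5) | 21870 ≤ d ∧ d ≤ 38400}

theorem lowerRowNumerators_eq : lowerRowNumerators =
    {21870, 22500, 23040, 23328, 24000, 24300, 25000, 25600, 25920, 27000, 27648, 28125, 28800,
     29160, 30000, 30375, 30720, 31104, 32000, 32400, 33750, 34560, 34992, 36000, 36450, 36864,
     37500, 38400} := by
  rw [lowerRowNumerators, Nat.divisors_mul, Nat.divisors_mul,
    Nat.divisors_prime_pow Nat.prime_two, Nat.divisors_prime_pow Nat.prime_three,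
    Nat.divisors_prime_pow Nat.prime_five]
  decide +kernel

theorem card_lowerRowNumerators : lowerRowNumerators.card = 28 := by
  rw [lowerRowNumerators_eq]
  rfl

theorem setOf_fourPlaceMul10_eq_image :
    {T : ℚ | 0 < T ∧ 81/80 ≤ T ∧ T ≤ 16/9 ∧ FourPlaceMul10 T} =
      (fun d : ℕ => (d : ℚ) / 21600) '' lowerRowNumerators := by
  have hbounds (d : ℕ) :
      (81/80 ≤ (d : ℚ) / 21600 ∧ (d : ℚ) / 21600 ≤ 16/9) ↔ 21870 ≤ d ∧ d ≤ 38400 := by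
    rw [le_div_iff₀ (by norm_num), div_le_iff₀ (by norm_num)]
    norm_num
  ext T
  simp only [lowerRowNumerators, Set.mem_image, Finset.mem_coe, Finset.mem_filter,
    Nat.mem_divisors]
  constructor
  · rintro ⟨hT, hlower, hupper, hcrit⟩
    obtain ⟨d, hd, rfl⟩ := (fourPlaceMul10_iff_exists_dvd hT).mp hcrit
    exact ⟨d, ⟨⟨hd, by norm_num⟩, (hbounds d).mp ⟨hlower, hupper⟩⟩, rfl⟩
  · rintro ⟨d, ⟨⟨hd, -⟩, hd_bounds⟩, rfl⟩
    obtain ⟨hlower, hupper⟩ := (hbounds d).mpr hd_bounds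
    have hT : (0 : ℚ) < d / 21600 := lt_of_lt_of_le (by norm_num) hlower
    exact ⟨hT, hlower, hupper, (fourPlaceMul10_iff_exists_dvd hT).mpr ⟨d, hd, rfl⟩⟩

theorem lower_extension_28_rows :
    {T : ℚ | 0 < T ∧ 81/80 ≤ T ∧ T ≤ 16/9 ∧ FourPlaceMul10 T}.ncard = 28 := by
  have hinj : Function.Injective fun d : ℕ => (d : ℚ) / 21600 :=
    fun d e h => Nat.cast_injective ((div_left_inj' (by norm_num)).mp h)
  rw [setOf_fourPlaceMul10_eq_image, Set.ncard_image_of_injective _ hinj,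
    Set.ncard_coe_finset, card_lowerRowNumerators]
end

section
/- The set of positive rational numbers T with 5/2 ≤ T ≤ 125/32 such that T·60³ is an integer divisible by 10 and (1/T)·60⁴ is an integer divisible by 10 has exactly 24 elements. -/
/-! If `m = 60³T/10` and `n = 60⁴T⁻¹/10` are integers, then `m * n = 60⁷/100 = 2¹² · 3⁷ · 5⁵`
whatever `T` is. So the admissible `T` are the fractions `d / 21600` with `d` a divisor of this
number, and the rows between `5/2` and `125/32` are counted by the divisors between `54000` and
`84375`, that is, by triples of exponents. -/

open Finset

section Field

variable {K : Type*} [Field K] [LinearOrder K] [IsStrictOrderedRing K]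

theorem exists_int_mul_and_inv_mul_iff {T : K} (hT : 0 < T) {a b : ℕ} (ha : a ≠ 0) :
    ((∃ m : ℤ, T * a = m) ∧ ∃ n : ℤ, T⁻¹ * b = n) ↔ ∃ d : ℕ, d ∣ a * b ∧ (d : K) / a = T := by
  have ha' : (a : K) ≠ 0 := Nat.cast_ne_zero.mpr ha
  constructor
  · rintro ⟨⟨m, hm⟩, n, hn⟩
    have hm_nonneg : 0 ≤ m := by
      have : (0 : K) ≤ m := hm ▸ mul_nonneg hT.le a.cast_nonneg
      exact_mod_cast this
    lift m to ℕ using hm_nonneg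
    rw [Int.cast_natCast] at hm
    refine ⟨m, Int.natCast_dvd_natCast.mp ⟨n, ?_⟩, by rw [← hm, mul_div_cancel_right₀ T ha']⟩
    have hprod : (a * b : K) = m * n := by
      rw [← hm, ← hn, mul_mul_mul_comm, mul_inv_cancel₀ hT.ne', one_mul]
    exact_mod_cast hprod
  · rintro ⟨d, ⟨n, hn⟩, rfl⟩
    have hd : (d : K) ≠ 0 := (div_ne_zero_iff.mp hT.ne').1
    refine ⟨⟨d, by simp [ha']⟩, n, ?_⟩
    have hn' : (a * b : K) = d * n := by exact_mod_cast hn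
    rw [inv_div, div_mul_eq_mul_div, hn', mul_div_cancel_left₀ _ hd, Int.cast_natCast]

end Field

theorem divisors_prime_pow_mul_prime_pow_mul_prime_pow {p q r : ℕ} (hp : p.Prime)
    (hq : q.Prime) (hr : r.Prime) (a b c : ℕ) :
    (p ^ a * q ^ b * r ^ c).divisors =
      (range (a + 1) ×ˢ range (b + 1) ×ˢ range (c + 1)).image
        fun e ↦ p ^ e.1 * q ^ e.2.1 * r ^ e.2.2 := by
  ext d
  simp only [Nat.divisors_mul, Nat.divisors_prime_pow hp, Nat.divisors_prime_pow hq,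
    Nat.divisors_prime_pow hr, mem_mul, mem_map, mem_image, mem_product, Prod.exists, mem_range,
    Function.Embedding.coeFn_mk, exists_exists_and_eq_and]
  constructor
  · rintro ⟨_, ⟨i, hi, j, hj, rfl⟩, k, hk, rfl⟩
    exact ⟨i, j, k, ⟨hi, hj, hk⟩, rfl⟩
  · rintro ⟨i, j, k, ⟨hi, hj, hk⟩, rfl⟩
    exact ⟨_, ⟨i, hi, j, hj, rfl⟩, k, hk, rfl⟩

theorem fourPlaceMul10_iff {T : ℚ} (hT : 0 < T) :
    FourPlaceMul10 T ↔ ∃ d ∈ Nat.divisors (2 ^ 12 * 3 ^ 7 * 5 ^ 5), (d : ℚ) / 21600 = T := by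
  have hm (m : ℤ) : T * 60 ^ 3 = 10 * m ↔ T * (21600 : ℕ) = m := by
    rw [Nat.cast_ofNat]
    constructor <;> intro h <;> linarith
  have hn (n : ℤ) : T⁻¹ * 60 ^ 4 = 10 * n ↔ T⁻¹ * (1296000 : ℕ) = n := by
    rw [Nat.cast_ofNat]
    constructor <;> intro h <;> linarith
  have h_prod : 21600 * 1296000 = 2 ^ 12 * 3 ^ 7 * 5 ^ 5 := by norm_num
  simp only [FourPlaceMul10, hm, hn]
  rw [exists_int_mul_and_inv_mul_iff hT (by norm_num), h_prod]
  simp [Nat.mem_divisors]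

theorem ncard_fourPlaceMul10_between (x y : ℕ) :
    {T : ℚ | 0 < T ∧ (x : ℚ) / 21600 ≤ T ∧ T ≤ (y : ℚ) / 21600 ∧ FourPlaceMul10 T}.ncard =
      #{d ∈ Nat.divisors (2 ^ 12 * 3 ^ 7 * 5 ^ 5) | x ≤ d ∧ d ≤ y} := by
  have h_pos : (0 : ℚ) < 21600 := by norm_num
  have h_le (i j : ℕ) : (i : ℚ) / 21600 ≤ (j : ℚ) / 21600 ↔ i ≤ j :=
    (div_le_div_iff_of_pos_right h_pos).trans Nat.cast_le
  have h_inj : Function.Injective fun d : ℕ ↦ (d : ℚ) / 21600 := fun i j h ↦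
    Nat.cast_injective ((div_left_inj' h_pos.ne').mp h)
  rw [← Set.ncard_coe_finset, ← Set.ncard_image_of_injective _ h_inj]
  congr 1
  ext T
  simp only [Set.mem_ofPred_eq, Set.mem_image, mem_coe, mem_filter]
  constructor
  · rintro ⟨hT, hx, hy, h⟩
    obtain ⟨d, hd, rfl⟩ := (fourPlaceMul10_iff hT).mp h
    exact ⟨d, ⟨hd, (h_le x d).mp hx, (h_le d y).mp hy⟩, rfl⟩
  · rintro ⟨d, ⟨hd, hx, hy⟩, rfl⟩
    have hT : (0 : ℚ) < d / 21600 := div_pos (Nat.cast_pos.mpr (Nat.pos_of_mem_divisors hd)) h_pos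
    exact ⟨hT, (h_le x d).mpr hx, (h_le d y).mpr hy, (fourPlaceMul10_iff hT).mpr ⟨d, hd, rfl⟩⟩

theorem card_divisors_between_54000_84375 :
    #{d ∈ Nat.divisors (2 ^ 12 * 3 ^ 7 * 5 ^ 5) | 54000 ≤ d ∧ d ≤ 84375} = 24 := by
  rw [divisors_prime_pow_mul_prime_pow_mul_prime_pow Nat.prime_two Nat.prime_three
    Nat.prime_five, filter_image]
  decide +kernel

theorem upper_extension_24_rows :
    {T : ℚ | 0 < T ∧ 5/2 ≤ T ∧ T ≤ 125/32 ∧ FourPlaceMul10 T}.ncard = 24 := by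
  have h_lower : (5 / 2 : ℚ) = (54000 : ℕ) / 21600 := by norm_num
  have h_upper : (125 / 32 : ℚ) = (84375 : ℕ) / 21600 := by norm_num
  rw [h_lower, h_upper, ncard_fourPlaceMul10_between, card_divisors_between_54000_84375]
end
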